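/- arXiv:2011.08821 — 3 statements merged into one kernel-verified Lean document; each statement's English description precedes it below -/
import Mathlib

section
/- Let (u,ρ) be a solution of the nonlocal form of the CH2 system on [0,T)×ℝ that conserves the Hamiltonian H. If there exist real numbers t₀ < t₁ and x₀ < x₁ with (t₀,t₁)×(x₀,x₁) ⊆ [0,T)×ℝ such that u(t,x) = 0 and ρ(t,x) = 0 for all (t,x) ∈ (t₀,t₁)×(x₀,x₁), then u(t,x) = 0 and ρ(t,x) = 0 for all (t,x) ∈ [0,T)×ℝ. -/
open MeasureTheory

/-!
At a time when `u`, `ρ` and `u_t` all vanish on an interval, the velocity equation makes the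
nonlocal force `F = K * f` vanish there, where `K` is the derivative of the Green's function of
`1 - ∂ₓ²`. Now `K` is strictly increasing on each side of its jump at `0`, so for two points `a < b`
of the interval, `K (b - y) - K (a - y) > 0` whenever `y ∉ [a, b]`. Integrating this against the
source `f ≥ 0`, which vanishes on `[a, b]`, gives `F b > F a` unless `f = 0` almost everywhere.
Hence the Hamiltonian is zero at this time, and by conservation at every time.
-/

theorem ae_eq_zero_of_integral_mul_eq {α : Type*} [MeasurableSpace α] {μ : Measure α}
    {k l g : α → ℝ} (hg : 0 ≤ g) (hkl : ∀ y ∈ Function.support g, k y < l y)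
    (hk : Integrable (fun y => k y * g y) μ) (hl : Integrable (fun y => l y * g y) μ)
    (h : ∫ y, k y * g y ∂μ = ∫ y, l y * g y ∂μ) : g =ᵐ[μ] 0 := by
  have hle : ∀ y, k y * g y ≤ l y * g y := fun y => by
    by_cases hy : g y = 0
    · simp only [hy, mul_zero, le_refl]
    · exact mul_le_mul_of_nonneg_right (hkl y hy).le (hg y)
  filter_upwards [(integral_eq_iff_of_ae_le hk hl (.of_forall hle)).1 h] with y hy
  by_contra hgy
  exact (hkl y hgy).ne (mul_right_cancel₀ hgy hy)

theorem measurable_real_sign : Measurable Real.sign :=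
  Measurable.ite measurableSet_Iio measurable_const
    (Measurable.ite measurableSet_Ioi measurable_const measurable_const)

/-- The derivative of the Green's function `x ↦ exp (-|x|) / 2` of `1 - ∂ₓ²` on the line, with the
value `0` at the jump `x = 0`. -/
noncomputable def greenDeriv (x : ℝ) : ℝ :=
  -(1/2) * Real.sign x * Real.exp (-|x|)

theorem measurable_greenDeriv : Measurable greenDeriv :=
  (measurable_real_sign.const_mul _).mul (by fun_prop)

theorem abs_greenDeriv_le (x : ℝ) : |greenDeriv x| ≤ 1/2 := by
  have hexp : Real.exp (-|x|) ≤ 1 := Real.exp_le_one_iff.2 (neg_nonpos.2 (abs_nonneg x))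
  have hpos := Real.exp_pos (-|x|)
  rw [greenDeriv, abs_le]
  rcases Real.sign_apply_eq x with h | h | h <;> rw [h] <;> constructor <;> linarith

theorem greenDeriv_of_pos {x : ℝ} (hx : 0 < x) : greenDeriv x = -(1/2) * Real.exp (-x) := by
  rw [greenDeriv, Real.sign_of_pos hx, abs_of_pos hx, mul_one]

theorem greenDeriv_of_neg {x : ℝ} (hx : x < 0) : greenDeriv x = 1/2 * Real.exp x := by
  rw [greenDeriv, Real.sign_of_neg hx, abs_of_neg hx, neg_neg, mul_neg_one, neg_neg]

theorem strictMonoOn_greenDeriv_Ioi : StrictMonoOn greenDeriv (Set.Ioi 0) := by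
  intro x hx y hy hxy
  rw [greenDeriv_of_pos hx, greenDeriv_of_pos hy]
  have := Real.exp_lt_exp.2 (neg_lt_neg hxy)
  linarith

theorem strictMonoOn_greenDeriv_Iio : StrictMonoOn greenDeriv (Set.Iio 0) := by
  intro x hx y hy hxy
  rw [greenDeriv_of_neg hx, greenDeriv_of_neg hy]
  have := Real.exp_lt_exp.2 hxy
  linarith

theorem greenDeriv_sub_lt_greenDeriv_sub {a b y : ℝ} (hab : a < b) (hy : y ∉ Set.Icc a b) :
    greenDeriv (a - y) < greenDeriv (b - y) := by
  have hlt : a - y < b - y := sub_lt_sub_right hab y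
  rcases lt_or_ge y a with hya | hay
  · exact strictMonoOn_greenDeriv_Ioi (sub_pos.2 hya) (sub_pos.2 (hya.trans hab)) hlt
  · have hby : b < y := not_le.1 fun hyb => hy ⟨hay, hyb⟩
    exact strictMonoOn_greenDeriv_Iio (sub_neg.2 (hab.trans hby)) (sub_neg.2 hby) hlt

theorem integrable_greenDeriv_sub_mul {g : ℝ → ℝ} (hg : Integrable g) (x : ℝ) :
    Integrable (fun y => greenDeriv (x - y) * g y) :=
  hg.bdd_mul (measurable_greenDeriv.comp (measurable_const.sub measurable_id)).aestronglyMeasurable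
    (.of_forall fun y => abs_greenDeriv_le (x - y))

/-- The convolution of `g` with `greenDeriv`, that is `∂ₓ (1 - ∂ₓ²)⁻¹ g`: the nonlocal force `F` of
the CH2 system when `g` is the source `f`. -/
noncomputable def greenDerivConv (g : ℝ → ℝ) (x : ℝ) : ℝ :=
  ∫ y, greenDeriv (x - y) * g y

theorem ae_eq_zero_of_greenDerivConv_eq {g : ℝ → ℝ} (hg : 0 ≤ g) (hg_int : Integrable g)
    {a b : ℝ} (hab : a < b) (hzero : ∀ y ∈ Set.Icc a b, g y = 0)
    (h : greenDerivConv g a = greenDerivConv g b) : g =ᵐ[volume] 0 :=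
  ae_eq_zero_of_integral_mul_eq hg
    (fun _ hy => greenDeriv_sub_lt_greenDeriv_sub hab (mt (hzero _) hy))
    (integrable_greenDeriv_sub_mul hg_int a) (integrable_greenDeriv_sub_mul hg_int b) h

/-- The source `f = u² + u_x² / 2 + ρ² / 2` of the nonlocal force of the CH2 system, at a fixed
time. -/
noncomputable def ch2Source (u ρ : ℝ → ℝ) (x : ℝ) : ℝ :=
  u x ^ 2 + (1/2) * deriv u x ^ 2 + (1/2) * ρ x ^ 2

/-- The Hamiltonian `H` of the CH2 system, at a fixed time. -/
noncomputable def ch2Hamiltonian (u ρ : ℝ → ℝ) : ℝ :=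
  (1/2) * ∫ x, (u x ^ 2 + deriv u x ^ 2 + ρ x ^ 2)

section FixedTime

variable {u ρ : ℝ → ℝ}

theorem ch2Source_nonneg : 0 ≤ ch2Source u ρ := fun x => by
  simp only [ch2Source, Pi.zero_apply]
  positivity

theorem ch2Source_eqOn_zero {s : Set ℝ} (hs : IsOpen s) (hu : Set.EqOn u 0 s)
    (hρ : Set.EqOn ρ 0 s) : Set.EqOn (ch2Source u ρ) 0 s := fun x hx => by
  have hux : deriv u x = 0 := (hu.deriv hs hx).trans (deriv_const x 0)
  simp only [ch2Source, hu hx, hux, hρ hx, Pi.zero_apply]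
  norm_num

theorem integrable_ch2Source (hu : Integrable (fun x => u x ^ 2))
    (hux : Integrable (fun x => deriv u x ^ 2)) (hρ : Integrable (fun x => ρ x ^ 2)) :
    Integrable (ch2Source u ρ) :=
  (hu.add (hux.const_mul _)).add (hρ.const_mul _)

theorem ch2Hamiltonian_eq_zero_of_ch2Source_ae_eq_zero (h : ch2Source u ρ =ᵐ[volume] 0) :
    ch2Hamiltonian u ρ = 0 := by
  rw [ch2Hamiltonian, integral_eq_zero_of_ae, mul_zero]
  filter_upwards [h] with x hx
  simp only [ch2Source, Pi.zero_apply] at hx ⊢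
  linarith [sq_nonneg (u x), sq_nonneg (deriv u x), sq_nonneg (ρ x)]

theorem eq_zero_of_ch2Hamiltonian_eq_zero (hu_cont : Continuous u) (hρ_cont : Continuous ρ)
    (hu : Integrable (fun x => u x ^ 2)) (hux : Integrable (fun x => deriv u x ^ 2))
    (hρ : Integrable (fun x => ρ x ^ 2)) (h : ch2Hamiltonian u ρ = 0) : u = 0 ∧ ρ = 0 := by
  have hint : ∫ x, (u x ^ 2 + deriv u x ^ 2 + ρ x ^ 2) = 0 :=
    (mul_eq_zero.1 h).resolve_left (by norm_num)
  have hnonneg : 0 ≤ fun x => u x ^ 2 + deriv u x ^ 2 + ρ x ^ 2 := fun x => by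
    dsimp only [Pi.zero_apply]
    positivity
  have hzero : ∀ᵐ x, u x = 0 ∧ ρ x = 0 := by
    filter_upwards [(integral_eq_zero_iff_of_nonneg hnonneg ((hu.add hux).add hρ)).1 hint]
      with x hx
    simp only [Pi.zero_apply] at hx
    constructor <;> rw [← sq_eq_zero_iff] <;>
      linarith [sq_nonneg (u x), sq_nonneg (deriv u x), sq_nonneg (ρ x)]
  exact ⟨(hu_cont.ae_eq_iff_eq volume continuous_zero).1 (hzero.mono fun _ => And.left),
    (hρ_cont.ae_eq_iff_eq volume continuous_zero).1 (hzero.mono fun _ => And.right)⟩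

end FixedTime

theorem ch2_unique_continuation_line_general {I : Set ℝ} {u ρ : ℝ → ℝ → ℝ}
    (hu : ∀ s ∈ I, Differentiable ℝ (u s)) (hρ : ∀ s ∈ I, Continuous (ρ s))
    (hu_L2 : ∀ s ∈ I, Integrable (fun x => u s x ^ 2))
    (hux_L2 : ∀ s ∈ I, Integrable (fun x => deriv (u s) x ^ 2))
    (hρ_L2 : ∀ s ∈ I, Integrable (fun x => ρ s x ^ 2))
    {t : ℝ} (ht : t ∈ I)
    (hcons : ∀ s ∈ I, ch2Hamiltonian (u s) (ρ s) = ch2Hamiltonian (u t) (ρ t))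
    {x₀ x₁ : ℝ} (hx01 : x₀ < x₁)
    (heq : ∀ x ∈ Set.Ioo x₀ x₁, deriv (fun s => u s x) t + u t x * deriv (u t) x =
      -greenDerivConv (ch2Source (u t) (ρ t)) x)
    (hvan : ∀ x ∈ Set.Ioo x₀ x₁, u t x = 0 ∧ ρ t x = 0)
    (hvan_t : ∀ x ∈ Set.Ioo x₀ x₁, HasDerivAt (fun s => u s x) 0 t) :
    ∀ s ∈ I, ∀ x, u s x = 0 ∧ ρ s x = 0 := by
  have hforce : ∀ x ∈ Set.Ioo x₀ x₁, greenDerivConv (ch2Source (u t) (ρ t)) x = 0 := fun x hx => by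
    simpa only [(hvan_t x hx).deriv, (hvan x hx).1, zero_mul, add_zero, zero_eq_neg] using heq x hx
  have hsource : Set.EqOn (ch2Source (u t) (ρ t)) 0 (Set.Ioo x₀ x₁) :=
    ch2Source_eqOn_zero isOpen_Ioo (fun x hx => (hvan x hx).1) fun x hx => (hvan x hx).2
  obtain ⟨b, hb⟩ := exists_between hx01
  obtain ⟨a, ha, hab⟩ := exists_between hb.1
  have hsource_ae : ch2Source (u t) (ρ t) =ᵐ[volume] 0 :=
    ae_eq_zero_of_greenDerivConv_eq ch2Source_nonneg
      (integrable_ch2Source (hu_L2 t ht) (hux_L2 t ht) (hρ_L2 t ht)) hab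
      (fun y hy => hsource (Set.Icc_subset_Ioo ha hb.2 hy))
      ((hforce a ⟨ha, hab.trans hb.2⟩).trans (hforce b hb).symm)
  intro s hs x
  have hzero : u s = 0 ∧ ρ s = 0 :=
    eq_zero_of_ch2Hamiltonian_eq_zero (hu s hs).continuous (hρ s hs) (hu_L2 s hs) (hux_L2 s hs)
      (hρ_L2 s hs) ((hcons s hs).trans (ch2Hamiltonian_eq_zero_of_ch2Source_ae_eq_zero hsource_ae))
  exact ⟨congrFun hzero.1 x, congrFun hzero.2 x⟩

/-- **Unique continuation for the CH2 system on the line (Theorem 2.1, non-periodic case).**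
If a solution of the nonlocal form of the CH2 system conserving the Hamiltonian vanishes on a
non-empty open rectangle `(t₀,t₁) × (x₀,x₁) ⊆ [0,T) × ℝ`, then it vanishes identically. -/
theorem ch2_unique_continuation_line
    (T : ℝ) (hT : 0 < T)
    (u ρ : ℝ → ℝ → ℝ)
    (hu_reg : ∀ t ∈ Set.Ico (0:ℝ) T, ContDiff ℝ 2 (u t))
    (hρ_reg : ∀ t ∈ Set.Ico (0:ℝ) T, ContDiff ℝ 1 (ρ t))
    (hu_t : ∀ t ∈ Set.Ico (0:ℝ) T, ∀ x : ℝ, DifferentiableAt ℝ (fun s => u s x) t)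
    (hρ_t : ∀ t ∈ Set.Ico (0:ℝ) T, ∀ x : ℝ, DifferentiableAt ℝ (fun s => ρ s x) t)
    (hu_L2 : ∀ t ∈ Set.Ico (0:ℝ) T, Integrable (fun x => (u t x)^2))
    (hux_L2 : ∀ t ∈ Set.Ico (0:ℝ) T, Integrable (fun x => (deriv (u t) x)^2))
    (hρ_L2 : ∀ t ∈ Set.Ico (0:ℝ) T, Integrable (fun x => (ρ t x)^2))
    (f : ℝ → ℝ → ℝ)
    (hf : ∀ t x, f t x = (u t x)^2 + (1/2) * (deriv (u t) x)^2 + (1/2) * (ρ t x)^2)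
    (hf_int : ∀ t ∈ Set.Ico (0:ℝ) T, Integrable (f t))
    (F : ℝ → ℝ → ℝ)
    (hF : ∀ t x, F t x = ∫ y, (-(1/2) * Real.sign (x - y) * Real.exp (-|x - y|)) * f t y)
    (heq1 : ∀ t ∈ Set.Ico (0:ℝ) T, ∀ x : ℝ,
      deriv (fun s => u s x) t + u t x * deriv (u t) x = -F t x)
    (heq2 : ∀ t ∈ Set.Ico (0:ℝ) T, ∀ x : ℝ,
      deriv (fun s => ρ s x) t + deriv (u t) x * ρ t x + u t x * deriv (ρ t) x = 0)
    (H : ℝ → ℝ)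
    (hH : ∀ t, H t = (1/2) * ∫ x, ((u t x)^2 + (deriv (u t) x)^2 + (ρ t x)^2))
    (hcons : ∀ t ∈ Set.Ico (0:ℝ) T, H t = H 0)
    (t₀ t₁ x₀ x₁ : ℝ) (ht01 : t₀ < t₁) (hx01 : x₀ < x₁)
    (hsub : Set.Ioo t₀ t₁ ⊆ Set.Ico (0:ℝ) T)
    (hvan : ∀ t ∈ Set.Ioo t₀ t₁, ∀ x ∈ Set.Ioo x₀ x₁, u t x = 0 ∧ ρ t x = 0) :
    ∀ t ∈ Set.Ico (0:ℝ) T, ∀ x : ℝ, u t x = 0 ∧ ρ t x = 0 := by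
  obtain ⟨t, ht⟩ := exists_between ht01
  obtain rfl : f = fun t => ch2Source (u t) (ρ t) := funext₂ hf
  obtain rfl : F = fun t => greenDerivConv (ch2Source (u t) (ρ t)) := funext₂ hF
  obtain rfl : H = fun t => ch2Hamiltonian (u t) (ρ t) := funext hH
  exact ch2_unique_continuation_line_general
    (fun s hs => (hu_reg s hs).differentiable two_ne_zero) (fun s hs => (hρ_reg s hs).continuous)
    hu_L2 hux_L2 hρ_L2 (hsub ht) (fun s hs => (hcons s hs).trans (hcons t (hsub ht)).symm) hx01
    (fun x _ => heq1 t (hsub ht) x) (hvan t ht) fun x hx =>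
      (hasDerivAt_const t 0).congr_of_eventuallyEq <|
        Filter.eventuallyEq_of_mem (isOpen_Ioo.mem_nhds ht) fun s hs => (hvan s hs x hx).1
end

section
/- Let (u,ρ) be a spatially 1-periodic solution of the nonlocal form of the CH2 system on [0,T)×ℝ that conserves the periodic Hamiltonian H. If there exist real numbers t₀ < t₁ in [0,T) and 0 ≤ x₀ < x₁ < 1 such that u(t,x) = 0 and ρ(t,x) = 0 for all (t,x) ∈ (t₀,t₁)×(x₀,x₁), then u(t,x) = 0 and ρ(t,x) = 0 for all (t,x) ∈ [0,T)×ℝ. -/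
open MeasureTheory

/-!
The derivative `g'` of the Green function of `1 - ∂ₓ²` on the circle increases strictly on `(0, 1)`,
so for `a < b < a + 1` the difference `g' (b - y) - g' (a - y)` is positive for every `y` in
`(b, a + 1)`, the part of the circle outside `[a, b]`. If `u`, `uₜ` and `ρ` vanish on an interval
containing `[a, b]` at some time, then so does the nonlocal term, by the equation for `u`; comparing
it at `a` and `b` shows that the nonnegative source, which vanishes on `[a, b]`, integrates to zero
against a positive weight over the rest of the circle. Hence `u` and `ρ` vanish on the whole circle
at that time, and conservation of the energy carries this to every other time.
-/

section

open Set Function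

theorem periodic_deriv {𝕜 E : Type*} [NontriviallyNormedField 𝕜] [NormedAddCommGroup E]
    [NormedSpace 𝕜 E] {f : 𝕜 → E} {c : 𝕜} (hf : Periodic f c) : Periodic (deriv f) c := fun x ↦ by
  rw [← deriv_comp_add_const, funext hf]

theorem eq_of_periodic_of_eqOn_Ico {α β : Type*} [AddCommGroup α] [LinearOrder α]
    [IsOrderedAddMonoid α] [Archimedean α] {f g : α → β} {c : α} (hf : Periodic f c)
    (hg : Periodic g c) (hc : 0 < c) {a : α} (hfg : EqOn f g (Ico a (a + c))) : f = g := by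
  ext x
  obtain ⟨n, hn, -⟩ := existsUnique_add_zsmul_mem_Ico hc x a
  rw [← hf.zsmul n x, ← hg.zsmul n x]
  exact hfg hn

theorem eqOn_zero_of_intervalIntegral_mul_eq_zero {k φ : ℝ → ℝ} {c d : ℝ} (hcd : c < d)
    (hk : ∀ y ∈ Ioo c d, 0 < k y) (hφ : ContinuousOn φ (Icc c d)) (hφ0 : ∀ y ∈ Ioo c d, 0 ≤ φ y)
    (hint : IntervalIntegrable (fun y ↦ k y * φ y) volume c d)
    (hzero : ∫ y in c..d, k y * φ y = 0) : EqOn φ 0 (Icc c d) := by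
  refine Measure.eqOn_Icc_of_ae_eq volume hcd.ne ?_ hφ continuousOn_const
  have hrestrict : volume.restrict (Ioc c d) = volume.restrict (Ioo c d) :=
    Measure.restrict_congr_set Ioo_ae_eq_Ioc.symm
  have hnonneg : 0 ≤ᵐ[volume.restrict (Ioc c d)] fun y ↦ k y * φ y := by
    rw [hrestrict]
    filter_upwards [ae_restrict_mem measurableSet_Ioo] with y hy
    exact mul_nonneg (hk y hy).le (hφ0 y hy)
  rw [intervalIntegral.integral_eq_zero_iff_of_le_of_nonneg_ae hcd.le hnonneg hint,
    hrestrict] at hzero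
  rw [Measure.restrict_congr_set Ioo_ae_eq_Icc.symm]
  filter_upwards [hzero, ae_restrict_mem measurableSet_Ioo] with y hprod hy
  exact (mul_eq_zero.mp hprod).resolve_left (hk y hy).ne'

/-- The derivative `g'` of the Green function of `1 - ∂ₓ²` on the circle `ℝ / ℤ`, as a periodic
function on `ℝ`. At its jumps, the integers, it takes the mean `0` of the one-sided limits. -/
noncomputable def circleGreenDeriv (z : ℝ) : ℝ :=
  if Int.fract z = 0 then 0 else Real.sinh (Int.fract z - 1 / 2) / (2 * Real.sinh (1 / 2))

theorem eq_circleGreenDeriv {g : ℝ → ℝ} (hint : ∀ n : ℤ, g n = 0)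
    (hnonint : ∀ z : ℝ, (∀ n : ℤ, z ≠ n) →
      g z = Real.sinh (z - ⌊z⌋ - 1 / 2) / (2 * Real.sinh (1 / 2))) :
    g = circleGreenDeriv := by
  ext z
  rw [circleGreenDeriv]
  split_ifs with hz
  · obtain ⟨n, rfl⟩ := Int.fract_eq_zero_iff.mp hz
    exact hint n
  · exact hnonint z fun n hn ↦ hz (hn ▸ Int.fract_intCast n)

theorem periodic_circleGreenDeriv : Periodic circleGreenDeriv 1 := fun z ↦ by
  simp only [circleGreenDeriv, Int.fract_add_one]

theorem measurable_circleGreenDeriv : Measurable circleGreenDeriv :=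
  Measurable.ite (measurable_fract (measurableSet_singleton 0)) measurable_const
    ((Real.measurable_sinh.comp (measurable_fract.sub_const _)).div_const _)

theorem two_mul_sinh_one_half_pos : 0 < 2 * Real.sinh (1 / 2) :=
  mul_pos two_pos (Real.sinh_pos_iff.mpr one_half_pos)

theorem norm_circleGreenDeriv_le (z : ℝ) : ‖circleGreenDeriv z‖ ≤ 1 / 2 := by
  rw [circleGreenDeriv]
  split_ifs
  · norm_num
  · have hfract : |Int.fract z - 1 / 2| ≤ 1 / 2 :=
      abs_le.mpr ⟨by linarith [Int.fract_nonneg z], by linarith [Int.fract_lt_one z]⟩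
    rw [norm_div, Real.norm_eq_abs, Real.abs_sinh, Real.norm_of_nonneg two_mul_sinh_one_half_pos.le,
      div_le_iff₀ two_mul_sinh_one_half_pos]
    linarith [Real.sinh_le_sinh.mpr hfract]

theorem strictMonoOn_circleGreenDeriv : StrictMonoOn circleGreenDeriv (Ioo 0 1) := by
  have hfract {z : ℝ} (hz : z ∈ Ioo (0 : ℝ) 1) : Int.fract z = z :=
    Int.fract_eq_self.mpr ⟨hz.1.le, hz.2⟩
  intro z hz w hw hzw
  simp only [circleGreenDeriv, hfract hz, hfract hw, hz.1.ne', hw.1.ne', if_false]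
  exact div_lt_div_of_pos_right (Real.sinh_lt_sinh.mpr (by linarith)) two_mul_sinh_one_half_pos

theorem circleGreenDeriv_sub_lt_sub {a b y : ℝ} (hab : a < b) (hy : y ∈ Ioo b (a + 1)) :
    circleGreenDeriv (a - y) < circleGreenDeriv (b - y) := by
  rw [← periodic_circleGreenDeriv (a - y), ← periodic_circleGreenDeriv (b - y)]
  apply strictMonoOn_circleGreenDeriv
  · constructor <;> linarith [hy.1, hy.2]
  · constructor <;> linarith [hy.1, hy.2]
  · linarith

/-- The convolution `g' * φ` on the circle, written as an integral over the fundamental domain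
`[0, 1)`; for the source density `φ` it is the nonlocal term `F` of the CH2 system. -/
noncomputable def circleGreenDerivConv (φ : ℝ → ℝ) (x : ℝ) : ℝ :=
  ∫ y in Ico (0 : ℝ) 1, circleGreenDeriv (x - y) * φ y

theorem circleGreenDerivConv_eq_intervalIntegral {φ : ℝ → ℝ} (hper : Periodic φ 1) (x a : ℝ) :
    circleGreenDerivConv φ x = ∫ y in a..a + 1, circleGreenDeriv (x - y) * φ y := by
  have hprod : Periodic (fun y ↦ circleGreenDeriv (x - y) * φ y) 1 :=
    (periodic_circleGreenDeriv.const_sub x).mul hper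
  rw [hprod.intervalIntegral_add_eq a 0, zero_add, intervalIntegral.integral_of_le zero_le_one,
    ← integral_Ico_eq_integral_Ioc, circleGreenDerivConv]

theorem intervalIntegrable_circleGreenDeriv_sub_mul {φ : ℝ → ℝ} {c d : ℝ}
    (hφ : IntervalIntegrable φ volume c d) (x : ℝ) :
    IntervalIntegrable (fun y ↦ circleGreenDeriv (x - y) * φ y) volume c d := by
  have hmeas : Measurable fun y ↦ circleGreenDeriv (x - y) :=
    measurable_circleGreenDeriv.comp (measurable_id.const_sub x)
  have hbound : ∀ y, ‖circleGreenDeriv (x - y)‖ ≤ 1 / 2 := fun y ↦ norm_circleGreenDeriv_le (x - y)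
  exact ⟨hφ.1.bdd_mul hmeas.aestronglyMeasurable (.of_forall hbound),
    hφ.2.bdd_mul hmeas.aestronglyMeasurable (.of_forall hbound)⟩

theorem eq_zero_of_circleGreenDerivConv_eq {φ : ℝ → ℝ} (hφ : Continuous φ) (hper : Periodic φ 1)
    (hφ0 : 0 ≤ φ) {a b : ℝ} (hab : a < b) (hba : b < a + 1) (hzero : EqOn φ 0 (Icc a b))
    (heq : circleGreenDerivConv φ a = circleGreenDerivConv φ b) : φ = 0 := by
  let k : ℝ → ℝ := fun y ↦ circleGreenDeriv (b - y) - circleGreenDeriv (a - y)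
  have hint_g (x c d : ℝ) :=
    intervalIntegrable_circleGreenDeriv_sub_mul (hφ.intervalIntegrable c d) x
  have hint_k (c d : ℝ) : IntervalIntegrable (fun y ↦ k y * φ y) volume c d := by
    simpa only [k, sub_mul] using (hint_g b c d).sub (hint_g a c d)
  have hleft : ∫ y in a..b, k y * φ y = 0 := by
    refine intervalIntegral.integral_zero_ae (.of_forall fun y hy ↦ ?_)
    rw [uIoc_of_le hab.le] at hy
    rw [hzero (Ioc_subset_Icc_self hy), Pi.zero_apply, mul_zero]
  have hright : ∫ y in b..a + 1, k y * φ y = 0 := calc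
    ∫ y in b..a + 1, k y * φ y = ∫ y in a..a + 1, k y * φ y := by
      rw [← intervalIntegral.integral_add_adjacent_intervals (hint_k a b) (hint_k b (a + 1)),
        hleft, zero_add]
    _ = circleGreenDerivConv φ b - circleGreenDerivConv φ a := by
      simp only [k, sub_mul,
        intervalIntegral.integral_sub (hint_g b a (a + 1)) (hint_g a a (a + 1)),
        circleGreenDerivConv_eq_intervalIntegral hper _ a]
    _ = 0 := by rw [heq, sub_self]
  have hrest : EqOn φ 0 (Icc b (a + 1)) :=
    eqOn_zero_of_intervalIntegral_mul_eq_zero hba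
      (fun y hy ↦ sub_pos.mpr (circleGreenDeriv_sub_lt_sub hab hy)) hφ.continuousOn
      (fun y _ ↦ hφ0 y) (hint_k b (a + 1)) hright
  have hperiod : EqOn φ 0 (Icc a (a + 1)) := by
    rw [← Icc_union_Icc_eq_Icc hab.le hba.le]
    exact hzero.union hrest
  exact eq_of_periodic_of_eqOn_Ico hper (fun _ ↦ rfl) one_pos (hperiod.mono Ico_subset_Icc_self)

/-- The source density `f = v² + v'² / 2 + r² / 2` of the nonlocal term of the CH2 system, for the
profiles `v = u(t, ·)` and `r = ρ(t, ·)` at a fixed time. -/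
noncomputable def ch2SourceDensity (v r : ℝ → ℝ) (x : ℝ) : ℝ :=
  v x ^ 2 + 1 / 2 * deriv v x ^ 2 + 1 / 2 * r x ^ 2

/-- The Hamiltonian `H` of the CH2 system on the circle, for the profiles `v = u(t, ·)` and
`r = ρ(t, ·)` at a fixed time. -/
noncomputable def ch2Energy (v r : ℝ → ℝ) : ℝ :=
  1 / 2 * ∫ x in Ico (0 : ℝ) 1, (v x ^ 2 + deriv v x ^ 2 + r x ^ 2)

section Profiles

variable {v r : ℝ → ℝ}

theorem continuous_ch2SourceDensity (hv : ContDiff ℝ 1 v) (hr : Continuous r) :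
    Continuous (ch2SourceDensity v r) :=
  ((hv.continuous.pow 2).add (((hv.continuous_deriv le_rfl).pow 2).const_mul _)).add
    ((hr.pow 2).const_mul _)

theorem periodic_ch2SourceDensity {c : ℝ} (hv : Periodic v c) (hr : Periodic r c) :
    Periodic (ch2SourceDensity v r) c := fun x ↦ by
  simp only [ch2SourceDensity, hv x, periodic_deriv hv x, hr x]

theorem ch2SourceDensity_nonneg : 0 ≤ ch2SourceDensity v r := fun x ↦ by
  simp only [ch2SourceDensity, Pi.zero_apply]
  positivity

theorem eq_zero_of_ch2SourceDensity_eq_zero (h : ch2SourceDensity v r = 0) : v = 0 ∧ r = 0 := by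
  have hsum (x : ℝ) : v x ^ 2 + 1 / 2 * deriv v x ^ 2 + 1 / 2 * r x ^ 2 = 0 := congrFun h x
  constructor <;> ext x <;> refine sq_eq_zero_iff.mp ?_ <;>
    linarith [hsum x, sq_nonneg (v x), sq_nonneg (deriv v x), sq_nonneg (r x)]

theorem ch2SourceDensity_eqOn_zero {s : Set ℝ} (hs : IsOpen s) (hv : EqOn v 0 s)
    (hr : EqOn r 0 s) : EqOn (ch2SourceDensity v r) 0 s := fun x hx ↦ by
  have hv' : deriv v x = 0 := (hv.deriv hs hx).trans (deriv_const x 0)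
  simp [ch2SourceDensity, hv hx, hr hx, hv']

theorem ch2Energy_zero : ch2Energy 0 0 = 0 := by
  simp [ch2Energy]

theorem eq_zero_of_ch2Energy_eq_zero (hv_per : Periodic v 1) (hr_per : Periodic r 1)
    (hv : ContDiff ℝ 1 v) (hr : Continuous r) (h : ch2Energy v r = 0) : v = 0 ∧ r = 0 := by
  let e : ℝ → ℝ := fun x ↦ v x ^ 2 + deriv v x ^ 2 + r x ^ 2
  have he : Continuous e :=
    ((hv.continuous.pow 2).add ((hv.continuous_deriv le_rfl).pow 2)).add (hr.pow 2)
  have he_per : Periodic e 1 := fun x ↦ by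
    simp only [e, hv_per x, periodic_deriv hv_per x, hr_per x]
  have hint : ∫ x in (0 : ℝ)..1, 1 * e x = 0 := by
    rw [ch2Energy, integral_Ico_eq_integral_Ioc, ← intervalIntegral.integral_of_le zero_le_one] at h
    simpa only [one_mul] using (mul_eq_zero.mp h).resolve_left one_half_pos.ne'
  have he_Icc : EqOn e 0 (Icc 0 1) :=
    eqOn_zero_of_intervalIntegral_mul_eq_zero zero_lt_one (fun _ _ ↦ one_pos) he.continuousOn
      (fun x _ ↦ by positivity) ((he.const_mul 1).intervalIntegrable 0 1) hint
  have he_zero : e = 0 := by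
    refine eq_of_periodic_of_eqOn_Ico he_per (fun _ ↦ rfl) one_pos (a := 0) ?_
    simpa only [zero_add] using he_Icc.mono Ico_subset_Icc_self
  have hsum (x : ℝ) : v x ^ 2 + deriv v x ^ 2 + r x ^ 2 = 0 := congrFun he_zero x
  constructor <;> ext x <;> refine sq_eq_zero_iff.mp ?_ <;>
    linarith [hsum x, sq_nonneg (v x), sq_nonneg (deriv v x), sq_nonneg (r x)]

theorem eq_zero_of_circleGreenDerivConv_ch2SourceDensity_eqOn_zero (hv_per : Periodic v 1)
    (hr_per : Periodic r 1) (hv : ContDiff ℝ 1 v) (hr : Continuous r) {x₀ x₁ : ℝ} (hx₀₁ : x₀ < x₁)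
    (hv0 : EqOn v 0 (Ioo x₀ x₁)) (hr0 : EqOn r 0 (Ioo x₀ x₁))
    (hconv : EqOn (circleGreenDerivConv (ch2SourceDensity v r)) 0 (Ioo x₀ x₁)) :
    v = 0 ∧ r = 0 := by
  obtain ⟨a, ha₀, ha₁⟩ := exists_between hx₀₁
  obtain ⟨b, hab, hb⟩ := exists_between (lt_min ha₁ (lt_add_one a))
  obtain ⟨hb₁, hba⟩ := lt_min_iff.mp hb
  have hsub : Icc a b ⊆ Ioo x₀ x₁ := Icc_subset_Ioo ha₀ hb₁
  apply eq_zero_of_ch2SourceDensity_eq_zero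
  refine eq_zero_of_circleGreenDerivConv_eq (continuous_ch2SourceDensity hv hr)
    (periodic_ch2SourceDensity hv_per hr_per) ch2SourceDensity_nonneg hab hba
    ((ch2SourceDensity_eqOn_zero isOpen_Ioo hv0 hr0).mono hsub) ?_
  rw [hconv (hsub (left_mem_Icc.mpr hab.le)), hconv (hsub (right_mem_Icc.mpr hab.le))]
  rfl

end Profiles

theorem ch2_unique_continuation_circle_general {I : Set ℝ} {u ρ : ℝ → ℝ → ℝ}
    (hu_per : ∀ t ∈ I, Periodic (u t) 1) (hρ_per : ∀ t ∈ I, Periodic (ρ t) 1)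
    (hu : ∀ t ∈ I, ContDiff ℝ 1 (u t)) (hρ : ∀ t ∈ I, Continuous (ρ t))
    {τ x₀ x₁ : ℝ} (hτ : τ ∈ I) (hx₀₁ : x₀ < x₁)
    (hcons : ∀ t ∈ I, ch2Energy (u t) (ρ t) = ch2Energy (u τ) (ρ τ))
    (hevol : ∀ x ∈ Ioo x₀ x₁, HasDerivAt (fun s ↦ u s x)
      (-circleGreenDerivConv (ch2SourceDensity (u τ) (ρ τ)) x - u τ x * deriv (u τ) x) τ)
    (hvan : ∀ x ∈ Ioo x₀ x₁, u τ x = 0 ∧ deriv (fun s ↦ u s x) τ = 0 ∧ ρ τ x = 0) :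
    ∀ t ∈ I, u t = 0 ∧ ρ t = 0 := by
  have hconv : EqOn (circleGreenDerivConv (ch2SourceDensity (u τ) (ρ τ))) 0 (Ioo x₀ x₁) := by
    intro x hx
    obtain ⟨hux, hutx, -⟩ := hvan x hx
    simpa [hux, hutx] using (hevol x hx).deriv
  obtain ⟨huτ, hρτ⟩ := eq_zero_of_circleGreenDerivConv_ch2SourceDensity_eqOn_zero (hu_per τ hτ)
    (hρ_per τ hτ) (hu τ hτ) (hρ τ hτ) hx₀₁ (fun x hx ↦ (hvan x hx).1)
    (fun x hx ↦ (hvan x hx).2.2) hconv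
  intro t ht
  refine eq_zero_of_ch2Energy_eq_zero (hu_per t ht) (hρ_per t ht) (hu t ht) (hρ t ht) ?_
  rw [hcons t ht, huτ, hρτ, ch2Energy_zero]

end

/-- **Unique continuation for the CH2 system on the circle (Theorem 2.1, periodic case).**
If a spatially `1`-periodic solution of the nonlocal form of the CH2 system conserving the
periodic Hamiltonian vanishes on `(t₀,t₁) × (x₀,x₁)` with `0 ≤ x₀ < x₁ < 1`, then it vanishes
identically. -/
theorem ch2_unique_continuation_circle
    (T : ℝ) (hT : 0 < T)
    (u ρ : ℝ → ℝ → ℝ)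
    (hu_per : ∀ t x, u t (x + 1) = u t x)
    (hρ_per : ∀ t x, ρ t (x + 1) = ρ t x)
    (hu_reg : ∀ t ∈ Set.Ico (0:ℝ) T, ContDiff ℝ 2 (u t))
    (hρ_reg : ∀ t ∈ Set.Ico (0:ℝ) T, ContDiff ℝ 1 (ρ t))
    (hu_t : ∀ t ∈ Set.Ico (0:ℝ) T, ∀ x : ℝ, DifferentiableAt ℝ (fun s => u s x) t)
    (hρ_t : ∀ t ∈ Set.Ico (0:ℝ) T, ∀ x : ℝ, DifferentiableAt ℝ (fun s => ρ s x) t)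
    (f : ℝ → ℝ → ℝ)
    (hf : ∀ t x, f t x = (u t x)^2 + (1/2) * (deriv (u t) x)^2 + (1/2) * (ρ t x)^2)
    (hf_cont : ∀ t ∈ Set.Ico (0:ℝ) T, Continuous (f t))
    (g' : ℝ → ℝ)
    (hg'_int : ∀ n : ℤ, g' (n : ℝ) = 0)
    (hg'_nonint : ∀ z : ℝ, (∀ n : ℤ, z ≠ (n : ℝ)) →
      g' z = Real.sinh (z - (⌊z⌋ : ℝ) - 1/2) / (2 * Real.sinh (1/2)))
    (F : ℝ → ℝ → ℝ)
    (hF : ∀ t x, F t x = ∫ y in Set.Ico (0:ℝ) 1, g' (x - y) * f t y)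
    (heq1 : ∀ t ∈ Set.Ico (0:ℝ) T, ∀ x : ℝ,
      deriv (fun s => u s x) t + u t x * deriv (u t) x = -F t x)
    (heq2 : ∀ t ∈ Set.Ico (0:ℝ) T, ∀ x : ℝ,
      deriv (fun s => ρ s x) t + deriv (u t) x * ρ t x + u t x * deriv (ρ t) x = 0)
    (H : ℝ → ℝ)
    (hH : ∀ t, H t = (1/2) * ∫ x in Set.Ico (0:ℝ) 1,
      ((u t x)^2 + (deriv (u t) x)^2 + (ρ t x)^2))
    (hcons : ∀ t ∈ Set.Ico (0:ℝ) T, H t = H 0)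
    (t₀ t₁ x₀ x₁ : ℝ) (ht01 : t₀ < t₁)
    (ht₀ : t₀ ∈ Set.Ico (0:ℝ) T) (ht₁ : t₁ ∈ Set.Ico (0:ℝ) T)
    (hx₀ : 0 ≤ x₀) (hx01 : x₀ < x₁) (hx₁ : x₁ < 1)
    (hvan : ∀ t ∈ Set.Ioo t₀ t₁, ∀ x ∈ Set.Ioo x₀ x₁, u t x = 0 ∧ ρ t x = 0) :
    ∀ t ∈ Set.Ico (0:ℝ) T, ∀ x : ℝ, u t x = 0 ∧ ρ t x = 0 := by
  obtain rfl : g' = circleGreenDeriv := eq_circleGreenDeriv hg'_int hg'_nonint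
  obtain rfl : f = fun t ↦ ch2SourceDensity (u t) (ρ t) := funext₂ hf
  obtain rfl : F = fun t ↦ circleGreenDerivConv (ch2SourceDensity (u t) (ρ t)) := funext₂ hF
  obtain rfl : H = fun t ↦ ch2Energy (u t) (ρ t) := funext hH
  obtain ⟨τ, hτ⟩ := exists_between ht01
  have hτT : τ ∈ Set.Ico 0 T := ⟨ht₀.1.trans hτ.1.le, hτ.2.trans ht₁.2⟩
  have hut : ∀ x ∈ Set.Ioo x₀ x₁, deriv (fun s ↦ u s x) τ = 0 := fun x hx ↦
    have hux : Set.EqOn (fun s ↦ u s x) 0 (Set.Ioo t₀ t₁) := fun s hs ↦ (hvan s hs x hx).1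
    (hux.deriv isOpen_Ioo hτ).trans (deriv_const τ 0)
  have hzero := ch2_unique_continuation_circle_general (fun t _ ↦ hu_per t) (fun t _ ↦ hρ_per t)
    (fun t ht ↦ (hu_reg t ht).of_le one_le_two) (fun t ht ↦ (hρ_reg t ht).continuous)
    hτT hx01 (fun t ht ↦ (hcons t ht).trans (hcons τ hτT).symm)
    (fun x _ ↦ eq_sub_of_add_eq (heq1 τ hτT x) ▸ (hu_t τ hτT x).hasDerivAt)
    (fun x hx ↦ ⟨(hvan τ hτ x hx).1, hut x hx, (hvan τ hτ x hx).2⟩)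
  exact fun t ht x ↦ ⟨congrFun (hzero t ht).1 x, congrFun (hzero t ht).2 x⟩
end

section
/- Let a, b ∈ ℝ with a < b, and define S_{a,b} : ℝ → ℝ by S_{a,b}(y) := (1/2)·sgn(a−y)·e^{−|a−y|} − (1/2)·sgn(b−y)·e^{−|b−y|}. Then: (1) S_{a,b} is integrable on ℝ; (2) S_{a,b}(y) > 0 for all y ∈ ℝ \ [a,b]; (3) for every continuous, non-negative, integrable f : ℝ → ℝ, writing F(x) := ∫_ℝ (−(1/2)·sgn(x−y)·e^{−|x−y|}) f(y) dy, one has F(b) − F(a) = ∫_ℝ S_{a,b}(y) f(y) dy. -/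
open MeasureTheory

theorem abs_real_sign_le_one (x : ℝ) : |Real.sign x| ≤ 1 := by
  rcases Real.sign_apply_eq x with h | h | h <;> simp [h]

theorem integrable_exp_neg_abs : Integrable fun x : ℝ => Real.exp (-|x|) := by
  have hhalf : IntegrableOn (fun x : ℝ => Real.exp (-x)) (Set.Ioi 0) := by
    simpa using exp_neg_integrableOn_Ioi 0 one_pos
  simpa using (integrable_fun_norm_addHaar (E := ℝ) volume (f := fun r => Real.exp (-r))).mpr
    (by simpa using hhalf)

/-- The derivative `g'` of the Green function `g x = exp (-|x|) / 2` of the Helmholtz operator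
`1 - ∂ₓ²`. At the jump `x = 0`, where `g` is not differentiable, it takes the value `0`. -/
noncomputable def helmholtzGreenDeriv (x : ℝ) : ℝ :=
  -(1 / 2) * Real.sign x * Real.exp (-|x|)

/-- The kernel `S_{a,b}`, written as `g' (b - y) - g' (a - y)`: integrating it against `f` yields
the increment from `a` to `b` of the convolution of `g'` with `f`. -/
noncomputable def helmholtzGreenDerivIncrement (a b y : ℝ) : ℝ :=
  helmholtzGreenDeriv (b - y) - helmholtzGreenDeriv (a - y)

theorem helmholtzGreenDerivIncrement_apply (a b y : ℝ) :
    helmholtzGreenDerivIncrement a b y =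
      (1 / 2) * Real.sign (a - y) * Real.exp (-|a - y|)
        - (1 / 2) * Real.sign (b - y) * Real.exp (-|b - y|) := by
  unfold helmholtzGreenDerivIncrement helmholtzGreenDeriv
  ring

theorem helmholtzGreenDeriv_of_pos {x : ℝ} (hx : 0 < x) :
    helmholtzGreenDeriv x = -(1 / 2) * Real.exp (-x) := by
  rw [helmholtzGreenDeriv, Real.sign_of_pos hx, abs_of_pos hx, mul_one]

theorem helmholtzGreenDeriv_of_neg {x : ℝ} (hx : x < 0) :
    helmholtzGreenDeriv x = 1 / 2 * Real.exp x := by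
  rw [helmholtzGreenDeriv, Real.sign_of_neg hx, abs_of_neg hx, neg_neg, neg_mul_neg, mul_one]

theorem strictMonoOn_helmholtzGreenDeriv_Ioi : StrictMonoOn helmholtzGreenDeriv (Set.Ioi 0) := by
  intro x hx y hy hxy
  rw [helmholtzGreenDeriv_of_pos hx, helmholtzGreenDeriv_of_pos hy]
  have hexp : Real.exp (-y) < Real.exp (-x) := Real.exp_lt_exp.mpr (neg_lt_neg hxy)
  linarith

theorem strictMonoOn_helmholtzGreenDeriv_Iio : StrictMonoOn helmholtzGreenDeriv (Set.Iio 0) := by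
  intro x hx y hy hxy
  rw [helmholtzGreenDeriv_of_neg hx, helmholtzGreenDeriv_of_neg hy]
  gcongr

theorem helmholtzGreenDerivIncrement_pos {a b y : ℝ} (hab : a < b) (hy : y ∉ Set.Icc a b) :
    0 < helmholtzGreenDerivIncrement a b y := by
  have hlt : a - y < b - y := sub_lt_sub_right hab y
  refine sub_pos.mpr ?_
  rcases lt_or_ge y a with hya | hay
  · have ha : 0 < a - y := sub_pos.mpr hya
    exact strictMonoOn_helmholtzGreenDeriv_Ioi ha (ha.trans hlt) hlt
  · have hb : b - y < 0 := sub_neg.mpr (lt_of_not_ge fun hyb => hy ⟨hay, hyb⟩)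
    exact strictMonoOn_helmholtzGreenDeriv_Iio (hlt.trans hb) hb hlt

theorem measurable_helmholtzGreenDeriv : Measurable helmholtzGreenDeriv :=
  (measurable_real_sign.const_mul _).mul (by fun_prop)

theorem abs_helmholtzGreenDeriv_le_exp (x : ℝ) :
    |helmholtzGreenDeriv x| ≤ 1 / 2 * Real.exp (-|x|) :=
  calc |helmholtzGreenDeriv x| = 1 / 2 * |Real.sign x| * Real.exp (-|x|) := by
        simp [helmholtzGreenDeriv, abs_mul]
    _ ≤ 1 / 2 * 1 * Real.exp (-|x|) := by gcongr; exact abs_real_sign_le_one x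
    _ = 1 / 2 * Real.exp (-|x|) := by rw [mul_one]

theorem abs_helmholtzGreenDeriv_le_half (x : ℝ) : |helmholtzGreenDeriv x| ≤ 1 / 2 := by
  have hexp : Real.exp (-|x|) ≤ 1 := Real.exp_le_one_iff.mpr (neg_nonpos.mpr (abs_nonneg x))
  linarith [abs_helmholtzGreenDeriv_le_exp x]

theorem integrable_helmholtzGreenDeriv : Integrable helmholtzGreenDeriv :=
  (integrable_exp_neg_abs.const_mul (1 / 2)).mono'
    measurable_helmholtzGreenDeriv.aestronglyMeasurable
    (.of_forall abs_helmholtzGreenDeriv_le_exp)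

theorem integrable_helmholtzGreenDerivIncrement (a b : ℝ) :
    Integrable (helmholtzGreenDerivIncrement a b) :=
  (integrable_helmholtzGreenDeriv.comp_sub_left b).sub
    (integrable_helmholtzGreenDeriv.comp_sub_left a)

section Convolution

variable {E : Type*} [NormedAddCommGroup E] [NormedSpace ℝ E] {μ : Measure ℝ} {f : ℝ → E}

theorem integrable_helmholtzGreenDeriv_sub_smul (hf : Integrable f μ) (x : ℝ) :
    Integrable (fun y => helmholtzGreenDeriv (x - y) • f y) μ :=
  hf.bdd_smul (1 / 2)
    (measurable_helmholtzGreenDeriv.comp (measurable_const.sub measurable_id)).aestronglyMeasurable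
    (.of_forall fun y => abs_helmholtzGreenDeriv_le_half (x - y))

theorem integral_helmholtzGreenDeriv_sub_integral (hf : Integrable f μ) (a b : ℝ) :
    (∫ y, helmholtzGreenDeriv (b - y) • f y ∂μ) - ∫ y, helmholtzGreenDeriv (a - y) • f y ∂μ =
      ∫ y, helmholtzGreenDerivIncrement a b y • f y ∂μ := by
  rw [← integral_sub (integrable_helmholtzGreenDeriv_sub_smul hf b)
    (integrable_helmholtzGreenDeriv_sub_smul hf a)]
  simp only [helmholtzGreenDerivIncrement, sub_smul]

end Convolution

theorem S_ab_properties_line_general {E : Type*} [NormedAddCommGroup E] [NormedSpace ℝ E]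
    [CompleteSpace E] {a b : ℝ} (hab : a < b) :
    Integrable (helmholtzGreenDerivIncrement a b) ∧
    (∀ y : ℝ, y ∉ Set.Icc a b → 0 < helmholtzGreenDerivIncrement a b y) ∧
    (∀ (μ : Measure ℝ) (f : ℝ → E), Integrable f μ →
      (∫ y, helmholtzGreenDeriv (b - y) • f y ∂μ) - ∫ y, helmholtzGreenDeriv (a - y) • f y ∂μ =
        ∫ y, helmholtzGreenDerivIncrement a b y • f y ∂μ) :=
  ⟨integrable_helmholtzGreenDerivIncrement a b, fun _ => helmholtzGreenDerivIncrement_pos hab,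
    fun _ _ hf => integral_helmholtzGreenDeriv_sub_integral hf a b⟩

/-- **Lemma 3.4 (non-periodic case).** For `a < b`, the function
`S_{a,b}(y) = (1/2)sgn(a-y)e^{-|a-y|} - (1/2)sgn(b-y)e^{-|b-y|}` is integrable on `ℝ`,
strictly positive outside `[a,b]`, and for every continuous non-negative integrable `f`,
with `F(x) = ∫ g'(x-y) f(y) dy` (`g'(x) = -(1/2)sgn(x)e^{-|x|}`) one has
`F(b) - F(a) = ∫ S_{a,b}(y) f(y) dy`. -/
theorem S_ab_properties_line
    (a b : ℝ) (hab : a < b)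
    (S : ℝ → ℝ)
    (hS : ∀ y, S y = (1/2) * Real.sign (a - y) * Real.exp (-|a - y|)
      - (1/2) * Real.sign (b - y) * Real.exp (-|b - y|)) :
    Integrable S ∧
    (∀ y : ℝ, y ∉ Set.Icc a b → 0 < S y) ∧
    (∀ f : ℝ → ℝ, Continuous f → (∀ x, 0 ≤ f x) → Integrable f →
      ∀ F : ℝ → ℝ,
        (∀ x, F x = ∫ y, (-(1/2) * Real.sign (x - y) * Real.exp (-|x - y|)) * f y) →
        F b - F a = ∫ y, S y * f y) := by
  obtain rfl : S = helmholtzGreenDerivIncrement a b :=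
    funext fun y => by rw [hS, helmholtzGreenDerivIncrement_apply]
  obtain ⟨hint, hpos, hdiff⟩ := S_ab_properties_line_general (E := ℝ) hab
  exact ⟨hint, hpos, fun f _ _ hf F hF => by rw [hF, hF]; exact hdiff volume f hf⟩
end
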